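/- Let s_1 and s_2 be binary strings with ℓ_1 := |s̃_1| < ℓ_2 := |s̃_2|. Then for every condensed binary string x with ℓ_1 ≤ |x| < ℓ_2 it holds that dtw(s_1, x)² + dtw(s_2, x)² ≥ dtw(s_1, s̃_2)². -/

import Mathlib

/-- One step of a warping path: move down, right, or diagonally. -/
def wpStep (a b : ℕ × ℕ) : Prop :=
  (b.1 = a.1 + 1 ∧ b.2 = a.2) ∨ (b.1 = a.1 ∧ b.2 = a.2 + 1) ∨
    (b.1 = a.1 + 1 ∧ b.2 = a.2 + 1)

/-- A warping path of order `m × n` (0-based indices). -/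
def IsWarpingPath (m n : ℕ) (p : List (ℕ × ℕ)) : Prop :=
  p.head? = some (0, 0) ∧ p.getLast? = some (m - 1, n - 1) ∧
    List.Chain' wpStep p ∧ ∀ q ∈ p, q.1 < m ∧ q.2 < n

/-- The cost of aligning binary strings `x` and `y` along path `p`:
the number of aligned mismatching pairs (for binary symbols,
`(x[i] - y[j])^2` is `0` if the symbols agree and `1` otherwise). -/
def pathCost (x y : List Bool) (p : List (ℕ × ℕ)) : ℕ :=
  (p.map fun q => if x.getD q.1 false = y.getD q.2 false then 0 else 1).sum

/-- The squared dynamic time warping distance `dtw(x,y)²` of two binary strings. -/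
noncomputable def dtwSq (x y : List Bool) : ℕ :=
  sInf {c | ∃ p, IsWarpingPath x.length y.length p ∧ pathCost x y p = c}

/-- The dynamic time warping distance `dtw(x,y)`. -/
noncomputable def dtw (x y : List Bool) : ℝ :=
  Real.sqrt (dtwSq x y)

/-- The condensation of a binary string: collapse every maximal run of equal
consecutive symbols to a single symbol. -/
def condense : List Bool → List Bool
  | [] => []
  | [a] => [a]
  | a :: b :: rest => if a = b then condense (b :: rest) else a :: condense (b :: rest)

/-- Auxiliary function collecting the block sizes of a binary string. -/
def blockSizesAux : Bool → ℕ → List Bool → List ℕ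
  | _, cnt, [] => [cnt]
  | cur, cnt, a :: rest =>
      if a = cur then blockSizesAux cur (cnt + 1) rest
      else cnt :: blockSizesAux a 1 rest

/-- The list of block sizes of a binary string (sizes of the maximal runs
of equal consecutive symbols, from left to right). -/
def blockSizes : List Bool → List ℕ
  | [] => []
  | a :: rest => blockSizesAux a 1 rest

/-- The objective `F(z) = Σᵢ dtw(sᵢ, z)²`. -/
noncomputable def Fobj (ss : List (List Bool)) (z : List Bool) : ℕ :=
  (ss.map fun s => dtwSq s z).sum

/-- `z` is a mean of the strings `ss`: a nonempty binary string minimizing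
`F` among all nonempty binary strings. -/
def IsMean (ss : List (List Bool)) (z : List Bool) : Prop :=
  z ≠ [] ∧ ∀ w : List Bool, w ≠ [] → Fobj ss z ≤ Fobj ss w

/-- The optimal value of a Min 1-Separated Sum instance with integers `b`
(1-based indexing) and selection size `r`: minimize the sum of `r` selected
integers, no two of which are consecutive. -/
noncomputable def mssValue (b : List ℕ) (r : ℕ) : ℕ :=
  sInf {s | ∃ I : List ℕ, I.length = r ∧ (∀ i ∈ I, 1 ≤ i ∧ i ≤ b.length) ∧
    List.Chain' (fun a c => a + 2 ≤ c) I ∧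
    (I.map fun i => b.getD (i - 1) 0).sum = s}

/-!
Write `ℓ(s) = |s̃|` and let `δ(s, t)` count the ends (first, last) at which `s` and `t` disagree.

A warping path stretches `x` and `y` to strings of equal length without changing their
condensations, and its cost is the Hamming distance of the stretched strings. As `ℓ(s) - 1` is the
number of adjacent disagreements in `s`, summing the triangle inequality over adjacent positions
gives `ℓ(y) - ℓ(x) + δ(x, y) ≤ 2 dtw(x, y)²`. If `y` is condensed and `ℓ(x) < ℓ(y)`, matching the
blocks of `x` greedily with the symbols of `y` attains this bound. Hence
`2 dtw(s₁, s̃₂)² = ℓ(s₂) - ℓ(s₁) + δ(s₁, s₂)`, and inserting `± ℓ(x)` and the triangle inequality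
for `δ` bounds this by `2 dtw(s₁, x)² + 2 dtw(s₂, x)²` for every nonempty `x`.
-/

section Mismatch

variable {α : Type*} [DecidableEq α]

/-- The discrete metric, with values in `ℕ`. It is also applied to `head?` and `getLast?`, which
avoids nonemptiness proofs. -/
def mismatch (a b : α) : ℕ := if a = b then 0 else 1

@[simp]
theorem mismatch_self (a : α) : mismatch a a = 0 := if_pos rfl

theorem mismatch_of_ne {a b : α} (h : a ≠ b) : mismatch a b = 1 := if_neg h

theorem mismatch_comm (a b : α) : mismatch a b = mismatch b a := by
  simp only [mismatch, eq_comm]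

@[simp]
theorem mismatch_some_some (a b : α) : mismatch (some a) (some b) = mismatch a b := by
  simp only [mismatch, Option.some.injEq]

theorem mismatch_triangle (a b c : α) : mismatch a c ≤ mismatch a b + mismatch b c := by
  grind [mismatch]

theorem bool_eq_of_ne_of_ne {a b c : Bool} (hab : a ≠ b) (hbc : b ≠ c) : a = c := by
  revert a b c
  decide

theorem mismatch_add_mismatch_of_ne (a : Bool) {b c : Bool} (h : b ≠ c) :
    mismatch a b + mismatch a c = 1 := by
  revert a b c
  decide

end Mismatch

section Condense

theorem condense_cons_cons_self (a : Bool) (l : List Bool) :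
    condense (a :: a :: l) = condense (a :: l) := if_pos rfl

theorem condense_cons_cons_of_ne {a b : Bool} (h : a ≠ b) (l : List Bool) :
    condense (a :: b :: l) = a :: condense (b :: l) := if_neg h

theorem condense_eq_destutter (l : List Bool) : condense l = l.destutter (· ≠ ·) := by
  induction l using condense.induct <;>
    simp_all [condense, List.destutter_cons_cons, ← List.destutter_cons']

theorem isChain_condense (l : List Bool) : (condense l).IsChain (· ≠ ·) :=
  condense_eq_destutter l ▸ l.isChain_destutter _

@[simp]
theorem condense_eq_nil {l : List Bool} : condense l = [] ↔ l = [] := by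
  rw [condense_eq_destutter, List.destutter_eq_nil]

theorem length_condense_cons_cons (a b : Bool) (l : List Bool) :
    (condense (a :: b :: l)).length = mismatch a b + (condense (b :: l)).length := by
  by_cases h : a = b
  · simp [h, condense_cons_cons_self]
  · simp [condense_cons_cons_of_ne h, mismatch_of_ne h, add_comm]

theorem length_condense_pos {l : List Bool} (hl : l ≠ []) : 0 < (condense l).length :=
  List.length_pos_iff.2 (mt condense_eq_nil.1 hl)

@[simp]
theorem head?_condense (l : List Bool) : (condense l).head? = l.head? := by
  induction l using condense.induct <;> simp_all [condense]

@[simp]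
theorem getLast?_condense (l : List Bool) : (condense l).getLast? = l.getLast? := by
  induction l using condense.induct <;> simp_all [condense, List.getLast?_cons]

theorem condense_cons_congr (a : Bool) {l l' : List Bool} (h : condense l = condense l') :
    condense (a :: l) = condense (a :: l') := by
  have hhead : l.head? = l'.head? := by rw [← head?_condense, h, head?_condense]
  match l, l' with
  | [], [] => rfl
  | b :: l, b' :: l' =>
    obtain rfl : b = b' := by simpa using hhead
    simp only [condense, h]

theorem drop_eq_getD_cons {α : Type*} {x : List α} {i : ℕ} (hi : i < x.length) (a : α) :
    x.drop i = x.getD i a :: x.drop (i + 1) := by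
  rw [List.drop_eq_getElem_cons hi, List.getD_eq_getElem _ _ hi]

theorem condense_map_getD_eq_condense_drop {x : List Bool} {i : ℕ} {l : List ℕ}
    (hstep : (i :: l).IsChain fun j k ↦ k = j ∨ k = j + 1)
    (hlast : (i :: l).getLast? = some (x.length - 1)) (hlt : ∀ j ∈ i :: l, j < x.length) :
    condense ((i :: l).map (x.getD · false)) = condense (x.drop i) := by
  induction l generalizing i with
  | nil =>
    have hi : i < x.length := hlt i List.mem_cons_self
    obtain rfl : i = x.length - 1 := by simpa using hlast
    rw [drop_eq_getD_cons hi false, List.drop_of_length_le (by lia), List.map_singleton]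
  | cons k l ih =>
    obtain ⟨hik, htail⟩ := List.isChain_cons_cons.1 hstep
    have ih := ih htail (by rwa [List.getLast?_cons_cons] at hlast)
      fun j hj ↦ hlt j (List.mem_cons_of_mem i hj)
    rcases hik with rfl | rfl
    · exact (condense_cons_cons_self _ _).trans ih
    · rw [drop_eq_getD_cons (hlt i List.mem_cons_self) false, List.map_cons]
      exact condense_cons_congr _ ih

theorem length_condense_map_add_le {ι : Type*} (f g : ι → Bool) (l : List ι) :
    (condense (l.map g)).length + mismatch (l.map f).head? (l.map g).head?
        + mismatch (l.map f).getLast? (l.map g).getLast?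
      ≤ 2 * (l.map fun i ↦ mismatch (f i) (g i)).sum + (condense (l.map f)).length := by
  match l with
  | [] => simp [condense]
  | [i] =>
    simp only [List.map_cons, List.map_nil, condense, List.length_singleton, List.head?_cons,
      List.getLast?_singleton, mismatch_some_some, List.sum_singleton]
    lia
  | i :: j :: l =>
    have ih := length_condense_map_add_le f g (j :: l)
    have hgf := mismatch_triangle (g i) (f i) (g j)
    have hfg := mismatch_triangle (f i) (f j) (g j)
    simp only [List.map_cons, length_condense_cons_cons, List.getLast?_cons_cons, List.head?_cons,
      mismatch_some_some, List.sum_cons, mismatch_comm (g i) (f i)] at ih hgf ⊢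
    lia

end Condense

section WarpingPath

variable {m n : ℕ} {x y : List Bool} {p : List (ℕ × ℕ)} {d : ℕ × ℕ}

theorem pathCost_eq_sum_mismatch (x y : List Bool) (p : List (ℕ × ℕ)) :
    pathCost x y p = (p.map fun q ↦ mismatch (x.getD q.1 false) (y.getD q.2 false)).sum := rfl

theorem pathCost_swap (x y : List Bool) (p : List (ℕ × ℕ)) :
    pathCost y x (p.map Prod.swap) = pathCost x y p := by
  simp only [pathCost, List.map_map, Function.comp_def, Prod.fst_swap, Prod.snd_swap, eq_comm]

theorem pathCost_map_add (x y : List Bool) (p : List (ℕ × ℕ)) (d : ℕ × ℕ) :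
    pathCost x y (p.map (· + d)) = pathCost (x.drop d.1) (y.drop d.2) p := by
  simp [pathCost, Function.comp_def, add_comm]

theorem wpStep.swap {a b : ℕ × ℕ} (h : wpStep a b) : wpStep a.swap b.swap := by
  grind [wpStep]

theorem wpStep.add_right {a b : ℕ × ℕ} (h : wpStep a b) (d : ℕ × ℕ) :
    wpStep (a + d) (b + d) := by
  simp only [wpStep, Prod.fst_add, Prod.snd_add] at h ⊢
  lia

namespace IsWarpingPath

theorem singleton : IsWarpingPath 1 1 [(0, 0)] :=
  ⟨rfl, rfl, List.isChain_singleton _, by simp⟩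

theorem pos (hp : IsWarpingPath m n p) : 0 < m ∧ 0 < n :=
  hp.2.2.2 (0, 0) (List.mem_of_head? hp.1)

theorem swap (hp : IsWarpingPath m n p) : IsWarpingPath n m (p.map Prod.swap) := by
  obtain ⟨hhead, hlast, hchain, hlt⟩ := hp
  refine ⟨by simp [hhead], by simp [hlast], ?_, ?_⟩
  · exact List.isChain_map_of_isChain Prod.swap (fun _ _ hab ↦ hab.swap) hchain
  · exact List.forall_mem_map.2 fun q hq ↦ (hlt q hq).symm

theorem cons_map_add (hp : IsWarpingPath m n p) (hd : wpStep (0, 0) d) :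
    IsWarpingPath (m + d.1) (n + d.2) ((0, 0) :: p.map (· + d)) := by
  obtain ⟨hm, hn⟩ := hp.pos
  obtain ⟨hhead, hlast, hchain, hlt⟩ := hp
  refine ⟨rfl, ?_, ?_, ?_⟩
  · simp only [List.getLast?_cons, List.getLast?_map, hlast, Option.map_some, Option.getD_some,
      Option.some.injEq, Prod.ext_iff, Prod.fst_add, Prod.snd_add]
    lia
  · refine List.isChain_cons.2 ⟨by simpa [hhead, Prod.mk_zero_zero] using hd, ?_⟩
    exact List.isChain_map_of_isChain _ (fun _ _ hab ↦ hab.add_right d) hchain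
  · rintro q (_ | ⟨_, hq⟩)
    · exact ⟨Nat.add_pos_left hm _, Nat.add_pos_left hn _⟩
    · obtain ⟨q, hqp, rfl⟩ := List.mem_map.1 hq
      exact ⟨Nat.add_lt_add_right (hlt q hqp).1 _, Nat.add_lt_add_right (hlt q hqp).2 _⟩

theorem exists_of_pos (hm : 0 < m) (hn : 0 < n) : ∃ p, IsWarpingPath m n p := by
  induction m, hm using Nat.le_induction with
  | base =>
    induction n, hn using Nat.le_induction with
    | base => exact ⟨_, singleton⟩
    | succ n _ ih =>
      obtain ⟨p, hp⟩ := ih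
      exact ⟨_, hp.cons_map_add (d := (0, 1)) (by simp [wpStep])⟩
  | succ m _ ih =>
    obtain ⟨p, hp⟩ := ih
    exact ⟨_, hp.cons_map_add (d := (1, 0)) (by simp [wpStep])⟩

theorem condense_map_fst (hp : IsWarpingPath x.length n p) :
    condense (p.map fun q ↦ x.getD q.1 false) = condense x := by
  obtain ⟨hhead, hlast, hchain, hlt⟩ := hp
  obtain ⟨p, rfl⟩ : ∃ p', p = (0, 0) :: p' := List.head?_eq_some_iff.1 hhead
  have hfst : condense ((((0, 0) :: p).map Prod.fst).map (x.getD · false)) = condense (x.drop 0) :=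
    condense_map_getD_eq_condense_drop
      (List.isChain_map_of_isChain _ (fun _ _ hab ↦ by grind [wpStep]) hchain)
      (by rw [← List.map_cons (f := Prod.fst), List.getLast?_map, hlast]; rfl)
      (by grind)
  rwa [List.map_map] at hfst

theorem condense_map_snd (hp : IsWarpingPath m y.length p) :
    condense (p.map fun q ↦ y.getD q.2 false) = condense y := by
  simpa [Function.comp_def] using hp.swap.condense_map_fst

theorem length_condense_add_le_two_mul_pathCost (hp : IsWarpingPath x.length y.length p) :
    (condense y).length + mismatch x.head? y.head? + mismatch x.getLast? y.getLast?
      ≤ 2 * pathCost x y p + (condense x).length := by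
  have h := length_condense_map_add_le (fun q : ℕ × ℕ ↦ x.getD q.1 false) (y.getD ·.2 false) p
  rw [← head?_condense, ← head?_condense (p.map _), ← getLast?_condense,
    ← getLast?_condense (p.map (y.getD ·.2 false)), hp.condense_map_fst, hp.condense_map_snd] at h
  simpa only [head?_condense, getLast?_condense, pathCost_eq_sum_mismatch] using h

end IsWarpingPath

end WarpingPath

section DtwSq

variable {x y : List Bool} {p : List (ℕ × ℕ)} {d : ℕ × ℕ}

theorem dtwSq_le_pathCost (hp : IsWarpingPath x.length y.length p) :
    dtwSq x y ≤ pathCost x y p :=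
  Nat.sInf_le ⟨p, hp, rfl⟩

theorem exists_pathCost_eq_dtwSq (hx : x ≠ []) (hy : y ≠ []) :
    ∃ p, IsWarpingPath x.length y.length p ∧ pathCost x y p = dtwSq x y := by
  obtain ⟨p, hp⟩ :=
    IsWarpingPath.exists_of_pos (List.length_pos_iff.2 hx) (List.length_pos_iff.2 hy)
  have hne : {c | ∃ p, IsWarpingPath x.length y.length p ∧ pathCost x y p = c}.Nonempty :=
    ⟨pathCost x y p, p, hp, rfl⟩
  exact Nat.sInf_mem hne

theorem dtwSq_comm (x y : List Bool) : dtwSq x y = dtwSq y x := by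
  have hswap {x y : List Bool} {c : ℕ} :
      (∃ p, IsWarpingPath x.length y.length p ∧ pathCost x y p = c) →
        ∃ p, IsWarpingPath y.length x.length p ∧ pathCost y x p = c :=
    fun ⟨p, hp, hcost⟩ ↦ ⟨p.map Prod.swap, hp.swap, (pathCost_swap x y p).trans hcost⟩
  exact congrArg sInf (Set.ext fun _ ↦ ⟨hswap, hswap⟩)

theorem length_condense_add_le_two_mul_dtwSq (hx : x ≠ []) (hy : y ≠ []) :
    (condense y).length + mismatch x.head? y.head? + mismatch x.getLast? y.getLast?
      ≤ 2 * dtwSq x y + (condense x).length := by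
  obtain ⟨p, hp, hcost⟩ := exists_pathCost_eq_dtwSq hx hy
  exact hcost ▸ hp.length_condense_add_le_two_mul_pathCost

theorem dtwSq_singleton_le (a b : Bool) : dtwSq [a] [b] ≤ mismatch a b :=
  dtwSq_le_pathCost (p := [(0, 0)]) IsWarpingPath.singleton

theorem dtwSq_le_add_dtwSq_drop (hd : wpStep (0, 0) d) (hx : d.1 < x.length)
    (hy : d.2 < y.length) :
    dtwSq x y ≤
      mismatch (x.getD 0 false) (y.getD 0 false) + dtwSq (x.drop d.1) (y.drop d.2) := by
  obtain ⟨p, hp, hcost⟩ := exists_pathCost_eq_dtwSq (x := x.drop d.1) (y := y.drop d.2)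
    (by simpa using hx) (by simpa using hy)
  have hpath := hp.cons_map_add hd
  rw [List.length_drop, List.length_drop, Nat.sub_add_cancel hx.le, Nat.sub_add_cancel hy.le]
    at hpath
  rw [← hcost, ← pathCost_map_add]
  exact dtwSq_le_pathCost hpath

theorem dtwSq_cons_cons_le_of_fst_step (a b : Bool) (hx : x ≠ []) (y : List Bool) :
    dtwSq (a :: x) (b :: y) ≤ mismatch a b + dtwSq x (b :: y) :=
  dtwSq_le_add_dtwSq_drop (d := (1, 0)) (by simp [wpStep])
    (by simpa [List.length_pos_iff] using hx) (by simp)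

theorem dtwSq_cons_cons_le_of_snd_step (a b : Bool) (x : List Bool) (hy : y ≠ []) :
    dtwSq (a :: x) (b :: y) ≤ mismatch a b + dtwSq (a :: x) y :=
  dtwSq_le_add_dtwSq_drop (d := (0, 1)) (by simp [wpStep])
    (by simp) (by simpa [List.length_pos_iff] using hy)

theorem dtwSq_cons_cons_le_of_diag_step (a b : Bool) (hx : x ≠ []) (hy : y ≠ []) :
    dtwSq (a :: x) (b :: y) ≤ mismatch a b + dtwSq x y :=
  dtwSq_le_add_dtwSq_drop (d := (1, 1)) (by simp [wpStep])
    (by simpa [List.length_pos_iff] using hx) (by simpa [List.length_pos_iff] using hy)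

theorem two_mul_dtwSq_singleton_le (a b : Bool) (y : List Bool)
    (hy : (b :: y).IsChain (· ≠ ·)) :
    2 * dtwSq [a] (b :: y) + 1
      ≤ (b :: y).length + mismatch a b + mismatch (some a) (b :: y).getLast? := by
  induction y generalizing b with
  | nil =>
    have hcost := dtwSq_singleton_le a b
    simp only [List.length_singleton, List.getLast?_singleton, mismatch_some_some]
    lia
  | cons b' y ih =>
    obtain ⟨hbb', hy'⟩ := List.isChain_cons_cons.1 hy
    have ih := ih b' hy'
    have hstep := dtwSq_cons_cons_le_of_snd_step a b [] (List.cons_ne_nil b' y)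
    have hflip := mismatch_add_mismatch_of_ne a hbb'
    simp only [List.getLast?_cons_cons, List.length_cons] at ih ⊢
    lia

theorem two_mul_dtwSq_le_of_head_eq (a : Bool) (x y : List Bool)
    (hy : (a :: y).IsChain (· ≠ ·)) (hle : (condense (a :: x)).length ≤ (a :: y).length) :
    2 * dtwSq (a :: x) (a :: y) + (condense (a :: x)).length
      ≤ (a :: y).length + mismatch (a :: x).getLast? (a :: y).getLast? := by
  induction x generalizing a y with
  | nil => simpa [condense] using two_mul_dtwSq_singleton_le a a y hy
  | cons a' x ih =>
    rw [length_condense_cons_cons] at hle ⊢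
    rw [List.getLast?_cons_cons (a := a)]
    by_cases haa' : a = a'
    · subst haa'
      have hstep := dtwSq_cons_cons_le_of_fst_step a a (List.cons_ne_nil a x) y
      simp only [mismatch_self, zero_add] at hle hstep ⊢
      have hrest := ih a y hy hle
      lia
    · rw [mismatch_of_ne haa'] at hle ⊢
      match y with
      | [] =>
        have hpos := length_condense_pos (List.cons_ne_nil a' x)
        rw [List.length_singleton] at hle
        lia
      | b :: y =>
        obtain ⟨hab, hy'⟩ := List.isChain_cons_cons.1 hy
        obtain rfl : b = a' := bool_eq_of_ne_of_ne hab.symm haa'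
        have hstep := dtwSq_cons_cons_le_of_diag_step a a (List.cons_ne_nil b x)
          (List.cons_ne_nil b y)
        simp only [mismatch_self, List.getLast?_cons_cons, List.length_cons] at hle hstep ⊢
        have hrest := ih b y hy' (by rw [List.length_cons]; lia)
        simp only [List.length_cons] at hrest
        lia

theorem two_mul_dtwSq_le (hx : x ≠ []) (hy : y.IsChain (· ≠ ·))
    (hlt : (condense x).length < y.length) :
    2 * dtwSq x y + (condense x).length
      ≤ y.length + mismatch x.head? y.head? + mismatch x.getLast? y.getLast? := by
  match x, y with
  | a :: x, [b] => exact absurd (length_condense_pos hx) (Nat.not_lt.2 (Nat.le_of_lt_succ hlt))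
  | a :: x, b :: b' :: y =>
    by_cases hab : a = b
    · subst hab
      have h := two_mul_dtwSq_le_of_head_eq a x (b' :: y) hy hlt.le
      lia
    · obtain ⟨hbb', hy'⟩ := List.isChain_cons_cons.1 hy
      obtain rfl : a = b' := bool_eq_of_ne_of_ne hab hbb'
      have h := two_mul_dtwSq_le_of_head_eq a x y hy' (Nat.le_of_lt_succ hlt)
      have hstep := dtwSq_cons_cons_le_of_snd_step a b x (List.cons_ne_nil a y)
      simp only [mismatch_of_ne hab, List.getLast?_cons_cons, List.length_cons, List.head?_cons,
        mismatch_some_some] at h hstep ⊢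
      lia

end DtwSq

theorem middle_length_candidates_bound_general {s₁ s₂ x : List Bool} (h₁ : s₁ ≠ [])
    (hx : x ≠ []) (hlt : (condense s₁).length < (condense s₂).length) :
    dtwSq s₁ (condense s₂) ≤ dtwSq s₁ x + dtwSq s₂ x := by
  have h₂ : s₂ ≠ [] := by rintro rfl; simp [condense] at hlt
  have hupper := two_mul_dtwSq_le h₁ (isChain_condense s₂) hlt
  rw [head?_condense, getLast?_condense] at hupper
  have hlower₁ := length_condense_add_le_two_mul_dtwSq h₁ hx
  have hlower₂ := length_condense_add_le_two_mul_dtwSq hx h₂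
  rw [dtwSq_comm x s₂] at hlower₂
  have hhead := mismatch_triangle s₁.head? x.head? s₂.head?
  have hlast := mismatch_triangle s₁.getLast? x.getLast? s₂.getLast?
  lia

/-- if `ℓ₁ = |s̃₁| < ℓ₂ = |s̃₂|`, then every condensed string `x`
with `ℓ₁ ≤ |x| < ℓ₂` satisfies `dtw(s₁,x)² + dtw(s₂,x)² ≥ dtw(s₁, s̃₂)²`. -/
theorem middle_length_candidates_bound (s1 s2 : List Bool)
    (h1 : s1 ≠ []) (h2 : s2 ≠ [])
    (hlt : (condense s1).length < (condense s2).length)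
    (x : List Bool) (hc : List.Chain' (· ≠ ·) x)
    (hge : (condense s1).length ≤ x.length)
    (hlt2 : x.length < (condense s2).length) :
    dtwSq s1 (condense s2) ≤ dtwSq s1 x + dtwSq s2 x := by
  have hx : x ≠ [] := List.length_pos_iff.1 ((length_condense_pos h1).trans_le hge)
  exact middle_length_candidates_bound_general h1 hx hlt
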